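/- Let K ≥ 2, τ > 0, and β ∈ ℝ^K with all β_i > 0. Define h(x) = (∑_{j=1}^K β_j/x_j^τ)^{−K} ∏_{i=1}^K x_i^{−(τ+1)}, k(x) = ∑_{j=1}^K β_j/x_j^τ, and J_0 = 1/((K−1)! τ^{K−1} ∏_{i=1}^K β_i). Then for all indices i, k, l, m, n: (K(K+1) β_m β_n / (J_0 (1 + δ_{mn}))) ∫_{S_K} h(x) (log x_i − log x_k)(log x_i − log x_l) / (k(x)² x_m^τ x_n^τ) d^{K−1}x = τ^{−2} [ δ_{imn} + δ_{ilmn} + δ_{ikmn} − δ_{klmn} − δ_{im}δ_{kn} − δ_{im}δ_{ln} − δ_{in}δ_{km} − δ_{in}δ_{lm} + δ_{km}δ_{ln} + δ_{kn}δ_{lm} − (2δ_{im} + 2δ_{in} − δ_{km} − δ_{kn} − δ_{lm} − δ_{ln} − δ_{imn} + (1/2)δ_{kmn} + (1/2)δ_{lmn}) log β_i + (δ_{im} + δ_{in} − δ_{km} − δ_{kn} − (1/2)δ_{imn} + (1/2)δ_{kmn}) log β_l + (δ_{im} + δ_{in} − δ_{lm} − δ_{ln} − (1/2)δ_{imn}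 + (1/2)δ_{lmn}) log β_k + (log β_i − log β_k)(log β_i − log β_l) + (1 − δ_{ik} − δ_{il} + δ_{kl}) π²/6 ], where a Kronecker delta symbol with several indices equals 1 if all its indices are equal and 0 otherwise. -/

import Mathlib

open MeasureTheory Finset

noncomputable def fillMap (K : ℕ) (u : Fin (K - 1) → ℝ) : Fin K → ℝ :=
  fun i => if h : (i : ℕ) < K - 1 then u ⟨i, h⟩ else 1 - ∑ j, u j

/-- The `(K-1)`-dimensional Lebesgue measure on the probability simplex `S_K`. -/
noncomputable def simplexMeasure (K : ℕ) : Measure (Fin K → ℝ) :=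
  Measure.map (fillMap K)
    (volume.restrict {u : Fin (K - 1) → ℝ | (∀ j, 0 ≤ u j) ∧ ∑ j, u j ≤ 1})

/-- The unnormalized Concrete density `h(x) = (∑_j β_j/x_j^τ)^{-K} ∏_i x_i^{-(τ+1)}`. -/
noncomputable def hfun (K : ℕ) (β : Fin K → ℝ) (τ : ℝ) (x : Fin K → ℝ) : ℝ :=
  (∑ j, β j / x j ^ τ) ^ (-(K : ℝ)) * ∏ i, x i ^ (-(τ + 1))

/-- `k(x) = ∑_j β_j/x_j^τ`. -/
noncomputable def kfun (K : ℕ) (β : Fin K → ℝ) (τ : ℝ) (x : Fin K → ℝ) : ℝ :=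
  ∑ j, β j / x j ^ τ

/-- `J_0 = 1/((K−1)! τ^{K−1} ∏_i β_i)`. -/
noncomputable def J0 (K : ℕ) (β : Fin K → ℝ) (τ : ℝ) : ℝ :=
  1 / ((Nat.factorial (K - 1) : ℝ) * τ ^ (K - 1) * ∏ i, β i)

/-- Kronecker delta. -/
def kd {K : ℕ} (a b : Fin K) : ℝ := if a = b then 1 else 0

/-!
Normalising independent generalised Fréchet variables `Y_j = (β_j / Z_j) ^ (1 / τ)`, where `Z_j`
is a Gamma variable of shape `α_j`, by their sum produces the inverse Schlömilch law
`IS(α, β, τ)`: in the coordinates `y = s • x` with `x` in the simplex, the joint density of the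
`Y_j` splits into the density of that law at `x` and a Fréchet density in the radius `s`, which
integrates to one.

The normalisation does not change log-ratios, and the `log Y_j` are independent with mean
`(log β_j - ψ(α_j)) / τ` and variance `ψ'(α_j) / τ ^ 2`, so bilinearity of the covariance gives
the raw second moments of log-ratios for every shape `α`. For `α = 1 + e_m + e_n` the recurrences
of `ψ` and `ψ'` turn them into Kronecker deltas: `ψ(1)` cancels and `ψ'(1) = π ^ 2 / 6`.
-/

section GammaFunction

open Asymptotics Filter Topology

/-- The unnormalised moment `∫₀^∞ (log t)^d t^(s-1) e^(-t) dt` of `log Z` for a Gamma variable `Z`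
of shape `s`; it is the `d`-th derivative of the Gamma function at `s > 0`. -/
noncomputable def gammaLogMoment (d : ℕ) (s : ℝ) : ℝ :=
  ∫ t in Set.Ioi (0 : ℝ), Real.log t ^ d * (t ^ (s - 1) * Real.exp (-t))

/-- The digamma function `Γ'/Γ` of a real variable. -/
noncomputable def digamma : ℝ → ℝ := logDeriv Real.Gamma

/-- The trigamma function, the derivative of `digamma`. -/
noncomputable def trigamma : ℝ → ℝ := deriv digamma

lemma isBigO_log_pow_mul_exp_neg_atTop (d : ℕ) (a : ℝ) :
    (fun t : ℝ ↦ Real.log t ^ d * Real.exp (-t)) =O[atTop] fun t ↦ t ^ (-a) := by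
  have hlog : (fun t : ℝ ↦ Real.log t ^ d) =O[atTop] fun t ↦ t ^ (1 : ℝ) := by
    simpa using (isLittleO_log_rpow_rpow_atTop (d : ℝ) one_pos).isBigO
  have hexp : (fun t : ℝ ↦ Real.exp (-t)) =O[atTop] fun t ↦ t ^ (-a - 1) := by
    simpa using (isLittleO_exp_neg_mul_rpow_atTop one_pos (-a - 1)).isBigO
  refine (hlog.mul hexp).congr' .rfl ?_
  filter_upwards [eventually_gt_atTop 0] with t ht
  rw [← Real.rpow_add ht, add_sub_cancel]

lemma isBigO_log_pow_mul_exp_neg_nhdsGT_zero (d : ℕ) {b : ℝ} (hb : 0 < b) :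
    (fun t : ℝ ↦ Real.log t ^ d * Real.exp (-t)) =O[𝓝[>] 0] fun t ↦ t ^ (-b) := by
  have hlog : (fun t : ℝ ↦ Real.log t ^ d) =O[𝓝[>] 0] fun t ↦ t ^ (-b) := by
    refine IsBigO.of_norm_left ?_
    simpa using (isLittleO_abs_log_rpow_rpow_nhdsGT_zero (d : ℝ) (neg_lt_zero.2 hb)).isBigO
  have hexp : (fun t : ℝ ↦ Real.exp (-t)) =O[𝓝[>] 0] fun _ ↦ (1 : ℝ) :=
    ((by fun_prop : Continuous fun t : ℝ ↦ Real.exp (-t)).tendsto 0).isBigO_one ℝ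
      |>.mono nhdsWithin_le_nhds
  simpa using hlog.mul hexp

lemma mellinConvergent_and_hasDerivAt_mellin_log_pow_mul_exp_neg (d : ℕ) {s : ℝ} (hs : 0 < s) :
    MellinConvergent (fun t ↦ ((Real.log t ^ d * Real.exp (-t) : ℝ) : ℂ)) s ∧
    HasDerivAt (mellin fun t ↦ ((Real.log t ^ d * Real.exp (-t) : ℝ) : ℂ))
      (mellin (fun t ↦ ((Real.log t ^ (d + 1) * Real.exp (-t) : ℝ) : ℂ)) s) s := by
  have hcont : ContinuousOn (fun t : ℝ ↦ ((Real.log t ^ d * Real.exp (-t) : ℝ) : ℂ)) (Set.Ioi 0) :=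
    Complex.continuous_ofReal.comp_continuousOn <|
      ((Real.continuousOn_log.mono fun _ ht ↦ ne_of_gt ht).pow d).mul (by fun_prop)
  have hloc := hcont.locallyIntegrableOn (μ := volume) measurableSet_Ioi
  have htop := Complex.isBigO_ofReal_left.2 (isBigO_log_pow_mul_exp_neg_atTop d (s + 1))
  have hbot := Complex.isBigO_ofReal_left.2
    (isBigO_log_pow_mul_exp_neg_nhdsGT_zero d (half_pos hs))
  have hsucc : (fun t : ℝ ↦ Real.log t • ((Real.log t ^ d * Real.exp (-t) : ℝ) : ℂ)) =
      fun t ↦ ((Real.log t ^ (d + 1) * Real.exp (-t) : ℝ) : ℂ) := by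
    funext t
    rw [Complex.real_smul, ← Complex.ofReal_mul, pow_succ', mul_assoc]
  have hlt : (s : ℂ).re < s + 1 := lt_add_one s
  have hgt : s / 2 < (s : ℂ).re := half_lt_self hs
  exact ⟨mellinConvergent_of_isBigO_rpow hloc htop hlt hbot hgt,
    hsucc ▸ (mellin_hasDerivAt_of_isBigO_rpow hloc htop hlt hbot hgt).2⟩

lemma cpow_smul_log_pow_mul_exp_neg (d : ℕ) (s : ℝ) {t : ℝ} (ht : 0 < t) :
    (t : ℂ) ^ ((s : ℂ) - 1) • ((Real.log t ^ d * Real.exp (-t) : ℝ) : ℂ) =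
      ((Real.log t ^ d * (t ^ (s - 1) * Real.exp (-t)) : ℝ) : ℂ) := by
  rw [smul_eq_mul, ← Complex.ofReal_one, ← Complex.ofReal_sub, ← Complex.ofReal_cpow ht.le]
  push_cast
  ring

lemma mellin_log_pow_mul_exp_neg (d : ℕ) (s : ℝ) :
    mellin (fun t ↦ ((Real.log t ^ d * Real.exp (-t) : ℝ) : ℂ)) s = gammaLogMoment d s := by
  rw [mellin, setIntegral_congr_fun measurableSet_Ioi fun t ht ↦
    cpow_smul_log_pow_mul_exp_neg d s ht]
  exact integral_ofReal

lemma integrableOn_log_pow_mul_rpow_mul_exp_neg (d : ℕ) {s : ℝ} (hs : 0 < s) :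
    IntegrableOn (fun t ↦ Real.log t ^ d * (t ^ (s - 1) * Real.exp (-t))) (Set.Ioi 0) :=
  ((mellinConvergent_and_hasDerivAt_mellin_log_pow_mul_exp_neg d hs).1.congr_fun
    (fun _ ht ↦ cpow_smul_log_pow_mul_exp_neg d s ht) measurableSet_Ioi).re

lemma hasDerivAt_gammaLogMoment (d : ℕ) {s : ℝ} (hs : 0 < s) :
    HasDerivAt (gammaLogMoment d) (gammaLogMoment (d + 1) s) s := by
  have h := (mellinConvergent_and_hasDerivAt_mellin_log_pow_mul_exp_neg d hs).2.real_of_complex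
  simpa only [mellin_log_pow_mul_exp_neg, Complex.ofReal_re] using h

lemma gammaLogMoment_zero {s : ℝ} (hs : 0 < s) : gammaLogMoment 0 s = Real.Gamma s := by
  simp [gammaLogMoment, Real.Gamma_eq_integral hs, mul_comm]

lemma hasDerivAt_Gamma {s : ℝ} (hs : 0 < s) : HasDerivAt Real.Gamma (gammaLogMoment 1 s) s :=
  (hasDerivAt_gammaLogMoment 0 hs).congr_of_eventuallyEq <| by
    filter_upwards [eventually_gt_nhds hs] with x hx using (gammaLogMoment_zero hx).symm

lemma digamma_eq_gammaLogMoment_div {s : ℝ} (hs : 0 < s) :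
    digamma s = gammaLogMoment 1 s / Real.Gamma s := by
  rw [digamma, logDeriv_apply, (hasDerivAt_Gamma hs).deriv]

lemma gammaLogMoment_one {s : ℝ} (hs : 0 < s) :
    gammaLogMoment 1 s = Real.Gamma s * digamma s := by
  rw [digamma_eq_gammaLogMoment_div hs, mul_div_cancel₀ _ (Real.Gamma_pos_of_pos hs).ne']

lemma hasDerivAt_digamma {s : ℝ} (hs : 0 < s) : HasDerivAt digamma (trigamma s) s := by
  have hquot : DifferentiableAt ℝ (fun x ↦ gammaLogMoment 1 x / Real.Gamma x) s :=
    (hasDerivAt_gammaLogMoment 1 hs).differentiableAt.div (hasDerivAt_Gamma hs).differentiableAt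
      (Real.Gamma_pos_of_pos hs).ne'
  refine (hquot.congr_of_eventuallyEq ?_).hasDerivAt
  filter_upwards [eventually_gt_nhds hs] with x hx using digamma_eq_gammaLogMoment_div hx

lemma gammaLogMoment_two {s : ℝ} (hs : 0 < s) :
    gammaLogMoment 2 s = Real.Gamma s * (digamma s ^ 2 + trigamma s) := by
  have hprod : HasDerivAt (gammaLogMoment 1)
      (gammaLogMoment 1 s * digamma s + Real.Gamma s * trigamma s) s :=
    ((hasDerivAt_Gamma hs).mul (hasDerivAt_digamma hs)).congr_of_eventuallyEq <| by
      filter_upwards [eventually_gt_nhds hs] with x hx using gammaLogMoment_one hx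
  rw [(hasDerivAt_gammaLogMoment 1 hs).unique hprod, gammaLogMoment_one hs]
  ring

lemma hasDerivAt_log_Gamma {s : ℝ} (hs : 0 < s) :
    HasDerivAt (fun x ↦ Real.log (Real.Gamma x)) (digamma s) s := by
  rw [digamma_eq_gammaLogMoment_div hs]
  exact (hasDerivAt_Gamma hs).log (Real.Gamma_pos_of_pos hs).ne'

lemma digamma_add_one {s : ℝ} (hs : 0 < s) : digamma (s + 1) = digamma s + s⁻¹ := by
  have hlog : ∀ᶠ x in 𝓝 s, Real.log (Real.Gamma (x + 1)) =
      Real.log (Real.Gamma x) + Real.log x := by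
    filter_upwards [eventually_gt_nhds hs] with x hx
    rw [Real.Gamma_add_one hx.ne', Real.log_mul hx.ne' (Real.Gamma_pos_of_pos hx).ne', add_comm]
  exact ((hasDerivAt_log_Gamma (by positivity)).comp_add_const s 1).unique
    (((hasDerivAt_log_Gamma hs).add (Real.hasDerivAt_log hs.ne')).congr_of_eventuallyEq hlog)

lemma trigamma_add_one {s : ℝ} (hs : 0 < s) : trigamma (s + 1) = trigamma s - (s ^ 2)⁻¹ := by
  have hdigamma : ∀ᶠ x in 𝓝 s, digamma (x + 1) = digamma x + x⁻¹ := by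
    filter_upwards [eventually_gt_nhds hs] with x hx using digamma_add_one hx
  exact ((hasDerivAt_digamma (by positivity)).comp_add_const s 1).unique
    (((hasDerivAt_digamma hs).add (hasDerivAt_inv hs.ne')).congr_of_eventuallyEq hdigamma)

lemma sin_pi_mul_pos {s : ℝ} (h₀ : 0 < s) (h₁ : s < 1) : 0 < Real.sin (Real.pi * s) :=
  Real.sin_pos_of_pos_of_lt_pi (by positivity) (by nlinarith [Real.pi_pos])

lemma digamma_one_sub {s : ℝ} (h₀ : 0 < s) (h₁ : s < 1) :
    digamma (1 - s) = digamma s + Real.pi * Real.cot (Real.pi * s) := by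
  have hlog : ∀ᶠ x in 𝓝 s, Real.log (Real.Gamma (1 - x)) =
      Real.log Real.pi - Real.log (Real.sin (Real.pi * x)) - Real.log (Real.Gamma x) := by
    filter_upwards [eventually_gt_nhds h₀, eventually_lt_nhds h₁] with x hx₀ hx₁
    rw [← Real.log_div Real.pi_ne_zero (sin_pi_mul_pos hx₀ hx₁).ne',
      ← Real.Gamma_mul_Gamma_one_sub, Real.log_mul (Real.Gamma_pos_of_pos hx₀).ne'
        (Real.Gamma_pos_of_pos (sub_pos.2 hx₁)).ne', add_sub_cancel_left]
  have hsin : HasDerivAt (fun x ↦ Real.log (Real.sin (Real.pi * x)))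
      (Real.pi * Real.cot (Real.pi * s)) s := by
    refine ((hasDerivAt_const_mul Real.pi).sin.log (sin_pi_mul_pos h₀ h₁).ne').congr_deriv ?_
    rw [Real.cot_eq_cos_div_sin]
    ring
  have h := ((hasDerivAt_log_Gamma (sub_pos.2 h₁)).comp_const_sub 1 s).unique
    (((hsin.const_sub _).sub (hasDerivAt_log_Gamma h₀)).congr_of_eventuallyEq hlog)
  linarith

lemma trigamma_one_sub {s : ℝ} (h₀ : 0 < s) (h₁ : s < 1) :
    trigamma (1 - s) = Real.pi ^ 2 / Real.sin (Real.pi * s) ^ 2 - trigamma s := by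
  have hdigamma : ∀ᶠ x in 𝓝 s, digamma (1 - x) =
      digamma x + Real.pi * (Real.cos (Real.pi * x) / Real.sin (Real.pi * x)) := by
    filter_upwards [eventually_gt_nhds h₀, eventually_lt_nhds h₁] with x hx₀ hx₁
    rw [digamma_one_sub hx₀ hx₁, Real.cot_eq_cos_div_sin]
  have hcot : HasDerivAt (fun x ↦ Real.cos (Real.pi * x) / Real.sin (Real.pi * x))
      (-Real.pi / Real.sin (Real.pi * s) ^ 2) s := by
    refine ((hasDerivAt_const_mul Real.pi).cos.div (hasDerivAt_const_mul Real.pi).sin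
      (sin_pi_mul_pos h₀ h₁).ne').congr_deriv ?_
    linear_combination
      -Real.pi / Real.sin (Real.pi * s) ^ 2 * Real.sin_sq_add_cos_sq (Real.pi * s)
  have h := ((hasDerivAt_digamma (sub_pos.2 h₁)).comp_const_sub 1 s).unique
    (((hasDerivAt_digamma h₀).add (hcot.const_mul Real.pi)).congr_of_eventuallyEq hdigamma)
  linear_combination -h

lemma digamma_two_mul {s : ℝ} (hs : 0 < s) :
    2 * digamma (2 * s) = digamma s + digamma (s + 1 / 2) + 2 * Real.log 2 := by
  have hlog : ∀ᶠ x in 𝓝 s, Real.log (Real.Gamma (2 * x)) =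
      Real.log (Real.Gamma x) + Real.log (Real.Gamma (x + 1 / 2)) -
        ((1 - 2 * x) * Real.log 2 + Real.log √Real.pi) := by
    filter_upwards [eventually_gt_nhds hs] with x hx
    have h₁ := (Real.Gamma_pos_of_pos hx).ne'
    have h₂ := (Real.Gamma_pos_of_pos (by positivity : 0 < x + 1 / 2)).ne'
    have h₃ := (Real.Gamma_pos_of_pos (by positivity : 0 < 2 * x)).ne'
    rw [← Real.log_mul h₁ h₂, Real.Gamma_mul_Gamma_add_half, Real.log_mul (by positivity)
      (by positivity), Real.log_mul h₃ (by positivity), Real.log_rpow two_pos]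
    ring
  have hlin : HasDerivAt (fun x ↦ (1 - 2 * x) * Real.log 2 + Real.log √Real.pi)
      (-2 * Real.log 2) s := by
    simpa using (((hasDerivAt_const_mul (2 : ℝ)).const_sub 1).mul_const (Real.log 2)).add_const
      (Real.log √Real.pi)
  have h := (HasDerivAt.comp s (hasDerivAt_log_Gamma (by positivity))
      (hasDerivAt_const_mul (2 : ℝ))).unique
    ((((hasDerivAt_log_Gamma hs).add ((hasDerivAt_log_Gamma (by positivity)).comp_add_const s
      (1 / 2))).sub hlin).congr_of_eventuallyEq hlog)
  linear_combination h

lemma trigamma_two_mul {s : ℝ} (hs : 0 < s) :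
    4 * trigamma (2 * s) = trigamma s + trigamma (s + 1 / 2) := by
  have hdigamma : ∀ᶠ x in 𝓝 s, 2 * digamma (2 * x) =
      digamma x + digamma (x + 1 / 2) + 2 * Real.log 2 := by
    filter_upwards [eventually_gt_nhds hs] with x hx using digamma_two_mul hx
  have h := ((HasDerivAt.comp s (hasDerivAt_digamma (by positivity))
      (hasDerivAt_const_mul (2 : ℝ))).const_mul 2).unique
    ((((hasDerivAt_digamma hs).add ((hasDerivAt_digamma (by positivity)).comp_add_const s
      (1 / 2))).add_const (2 * Real.log 2)).congr_of_eventuallyEq hdigamma)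
  linear_combination h

-- Reflection gives `trigamma (1 / 2) = π ^ 2 / 2`, and duplication gives
-- `trigamma (1 / 2) = 3 * trigamma 1`.
lemma trigamma_one : trigamma 1 = Real.pi ^ 2 / 6 := by
  have hrefl := trigamma_one_sub one_half_pos one_half_lt_one
  have hdup := trigamma_two_mul one_half_pos
  rw [mul_one_div, Real.sin_pi_div_two] at hrefl
  norm_num at hrefl hdup
  linarith

end GammaFunction

section ProductMeasures

open ProbabilityTheory
open scoped ENNReal

lemma lintegral_fin_prod_eq_prod {n : ℕ} {E : Fin n → Type*} {mE : ∀ i, MeasurableSpace (E i)}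
    (μ : ∀ i, Measure (E i)) [∀ i, SigmaFinite (μ i)] {f : ∀ i, E i → ℝ≥0∞}
    (hf : ∀ i, Measurable (f i)) :
    ∫⁻ x, ∏ i, f i (x i) ∂Measure.pi μ = ∏ i, ∫⁻ x, f i x ∂μ i := by
  induction n with
  | zero => simp
  | succ n ih =>
    have hmeas : Measurable fun y : ∀ j : Fin n, E j.succ ↦ ∏ j, f j.succ (y j) :=
      measurable_prod _ fun j _ ↦ (hf j.succ).comp (measurable_pi_apply j)
    calc ∫⁻ x, ∏ i, f i (x i) ∂Measure.pi μ
        = ∫⁻ p : E 0 × (∀ j : Fin n, E j.succ), f 0 p.1 * ∏ j : Fin n, f j.succ (p.2 j)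
            ∂(μ 0).prod (Measure.pi fun j ↦ μ j.succ) := by
          rw [← (measurePreserving_piFinSuccAbove μ 0).symm.lintegral_comp_emb
            (MeasurableEquiv.measurableEmbedding _)]
          simp_rw [MeasurableEquiv.piFinSuccAbove_symm_apply, Fin.insertNthEquiv,
            Fin.prod_univ_succ, Fin.insertNth_zero]
          rfl
      _ = (∫⁻ t, f 0 t ∂μ 0) * ∏ j : Fin n, ∫⁻ t, f j.succ t ∂μ j.succ := by
          rw [← ih _ fun j ↦ hf j.succ]
          exact lintegral_prod_mul (hf 0).aemeasurable hmeas.aemeasurable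
      _ = ∏ i, ∫⁻ t, f i t ∂μ i := (Fin.prod_univ_succ fun i ↦ ∫⁻ t, f i t ∂μ i).symm

lemma lintegral_fintype_prod_eq_prod {ι : Type*} [Fintype ι] {E : ι → Type*}
    {mE : ∀ i, MeasurableSpace (E i)} (μ : ∀ i, Measure (E i)) [∀ i, SigmaFinite (μ i)]
    {f : ∀ i, E i → ℝ≥0∞} (hf : ∀ i, Measurable (f i)) :
    ∫⁻ x, ∏ i, f i (x i) ∂Measure.pi μ = ∏ i, ∫⁻ x, f i x ∂μ i := by
  let e := (Fintype.equivFin ι).symm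
  rw [← (measurePreserving_piCongrLeft _ e).lintegral_comp_emb
    (MeasurableEquiv.measurableEmbedding _)]
  simp_rw [← e.prod_comp, MeasurableEquiv.coe_piCongrLeft, Equiv.piCongrLeft_apply_apply]
  exact lintegral_fin_prod_eq_prod _ fun j ↦ hf (e j)

lemma pi_withDensity_eq {ι : Type*} [Fintype ι] {E : ι → Type*} {mE : ∀ i, MeasurableSpace (E i)}
    (μ : ∀ i, Measure (E i)) [∀ i, SigmaFinite (μ i)] {f : ∀ i, E i → ℝ≥0∞}
    (hf : ∀ i, Measurable (f i)) [∀ i, SigmaFinite ((μ i).withDensity (f i))] :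
    Measure.pi (fun i ↦ (μ i).withDensity (f i)) =
      (Measure.pi μ).withDensity fun x ↦ ∏ i, f i (x i) := by
  refine Measure.pi_eq fun s hs ↦ ?_
  rw [withDensity_apply _ (.univ_pi hs), Measure.restrict_pi_pi,
    lintegral_fintype_prod_eq_prod _ hf]
  exact prod_congr rfl fun i _ ↦ (withDensity_apply _ (hs i)).symm

variable {ι Ω : Type*} [DecidableEq ι] {mΩ : MeasurableSpace Ω} {μ : Measure Ω} {X : ι → Ω → ℝ}

lemma covariance_eq_ite_of_iIndepFun (hX : iIndepFun X μ) (hX2 : ∀ i, MemLp (X i) 2 μ) (i j : ι) :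
    cov[X i, X j; μ] = if i = j then Var[X i; μ] else 0 := by
  split_ifs with h
  · rw [← h, covariance_self (hX2 i).aemeasurable]
  · exact (hX.indepFun h).covariance_eq_zero (hX2 i) (hX2 j)

lemma integral_sub_mul_sub_of_iIndepFun [IsProbabilityMeasure μ] (hX : iIndepFun X μ)
    (hX2 : ∀ i, MemLp (X i) 2 μ) (i k l : ι) :
    ∫ ω, (X i ω - X k ω) * (X i ω - X l ω) ∂μ =
      (μ[X i] - μ[X k]) * (μ[X i] - μ[X l]) +
        ((1 - (if i = k then 1 else 0) - (if i = l then 1 else 0)) * Var[X i; μ] +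
          (if k = l then 1 else 0) * Var[X k; μ]) := by
  have hmean (j : ι) : μ[X i - X j] = μ[X i] - μ[X j] :=
    integral_sub ((hX2 i).integrable one_le_two) ((hX2 j).integrable one_le_two)
  have hcov := covariance_sub_sub (hX2 i) (hX2 k) (hX2 i) (hX2 l)
  rw [covariance_comm (X k) (X i)] at hcov
  simp only [covariance_eq_sub ((hX2 i).sub (hX2 k)) ((hX2 i).sub (hX2 l)), hmean,
    covariance_eq_ite_of_iIndepFun hX hX2, sub_eq_iff_eq_add'] at hcov
  refine hcov.trans ?_
  split_ifs <;> ring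

end ProductMeasures

section FrechetLaw

open ProbabilityTheory

variable {τ α b : ℝ}

lemma gammaMeasure_eq_withDensity_Ioi (α r : ℝ) :
    gammaMeasure α r = (volume.restrict (Set.Ioi 0)).withDensity fun w ↦
      ENNReal.ofReal (r ^ α / Real.Gamma α * w ^ (α - 1) * Real.exp (-(r * w))) := by
  rw [← withDensity_indicator measurableSet_Ioi, gammaMeasure]
  refine withDensity_congr_ae ?_
  filter_upwards [Measure.ae_ne volume (0 : ℝ)] with w hw
  rcases hw.lt_or_gt with hneg | hpos
  · rw [gammaPDF_of_neg hneg, Set.indicator_of_notMem (Set.notMem_Ioi.2 hneg.le)]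
  · rw [gammaPDF_of_nonneg hpos.le, Set.indicator_of_mem (Set.mem_Ioi.2 hpos)]

lemma gammaDensity_nonneg (hα : 0 < α) {r w : ℝ} (hr : 0 < r) (hw : 0 < w) :
    0 ≤ r ^ α / Real.Gamma α * w ^ (α - 1) * Real.exp (-(r * w)) := by
  have := Real.Gamma_pos_of_pos hα
  positivity

lemma integrable_log_pow_gammaMeasure (d : ℕ) (hα : 0 < α) :
    Integrable (fun w ↦ Real.log w ^ d) (gammaMeasure α 1) := by
  rw [gammaMeasure_eq_withDensity_Ioi, integrable_withDensity_iff_integrable_smul' (by fun_prop)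
    (by simp)]
  refine IntegrableOn.congr_fun ((integrableOn_log_pow_mul_rpow_mul_exp_neg d hα).div_const
    (Real.Gamma α)) (fun w hw ↦ ?_) measurableSet_Ioi
  rw [ENNReal.toReal_ofReal (gammaDensity_nonneg hα one_pos hw), smul_eq_mul, Real.one_rpow,
    one_mul]
  ring

lemma integral_log_pow_gammaMeasure (d : ℕ) (hα : 0 < α) :
    ∫ w, Real.log w ^ d ∂gammaMeasure α 1 = gammaLogMoment d α / Real.Gamma α := by
  rw [gammaMeasure_eq_withDensity_Ioi, integral_withDensity_eq_integral_toReal_smul (by fun_prop)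
    (by simp), gammaLogMoment, ← integral_div]
  refine setIntegral_congr_fun measurableSet_Ioi fun w hw ↦ ?_
  rw [ENNReal.toReal_ofReal (gammaDensity_nonneg hα one_pos hw), smul_eq_mul, Real.one_rpow,
    one_mul]
  ring

lemma memLp_log_gammaMeasure (hα : 0 < α) : MemLp Real.log 2 (gammaMeasure α 1) :=
  (memLp_two_iff_integrable_sq (by fun_prop)).2 (integrable_log_pow_gammaMeasure 2 hα)

lemma integral_log_gammaMeasure (hα : 0 < α) :
    ∫ w, Real.log w ∂gammaMeasure α 1 = digamma α := by
  rw [digamma_eq_gammaLogMoment_div hα]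
  simpa using integral_log_pow_gammaMeasure 1 hα

lemma variance_log_gammaMeasure (hα : 0 < α) :
    Var[Real.log; gammaMeasure α 1] = trigamma α := by
  have := isProbabilityMeasure_gammaMeasure hα one_pos
  have hsq : ∫ w, Real.log w ^ 2 ∂gammaMeasure α 1 = digamma α ^ 2 + trigamma α := by
    rw [integral_log_pow_gammaMeasure 2 hα, gammaLogMoment_two hα,
      mul_div_cancel_left₀ _ (Real.Gamma_pos_of_pos hα).ne']
  rw [variance_eq_sub (memLp_log_gammaMeasure hα), integral_log_gammaMeasure hα]
  simp [hsq]

/-- The density on `(0, ∞)` of `(b / Z) ^ (1 / τ)`, where `Z` is a Gamma variable of shape `α` and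
rate `1`: a generalised Fréchet density, the usual one being the case `α = 1`. -/
noncomputable def frechetPDF (τ α b t : ℝ) : ℝ :=
  |τ| * b ^ α / Real.Gamma α * t ^ (-(τ * α + 1)) * Real.exp (-(b / t ^ τ))

/-- The generalised Fréchet law on `(0, ∞)`, with density `frechetPDF`. -/
noncomputable def frechetMeasure (τ α b : ℝ) : Measure ℝ :=
  (volume.restrict (Set.Ioi 0)).withDensity fun t ↦ ENNReal.ofReal (frechetPDF τ α b t)

@[fun_prop]
lemma measurable_frechetPDF {Ω : Type*} [MeasurableSpace Ω] {f g : Ω → ℝ} (hf : Measurable f)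
    (hg : Measurable g) : Measurable fun ω ↦ frechetPDF τ α (f ω) (g ω) := by
  unfold frechetPDF
  fun_prop

lemma frechetPDF_nonneg (hα : 0 < α) (hb : 0 < b) {t : ℝ} (ht : 0 < t) :
    0 ≤ frechetPDF τ α b t := by
  have := Real.Gamma_pos_of_pos hα
  unfold frechetPDF
  positivity

lemma frechetPDF_eq_abs_deriv_mul (hb : 0 < b) {t : ℝ} (ht : 0 < t) :
    frechetPDF τ α b t = |b * (-τ * t ^ (-τ - 1))| *
      (1 ^ α / Real.Gamma α * (b * t ^ (-τ)) ^ (α - 1) * Real.exp (-(1 * (b * t ^ (-τ))))) := by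
  have hpow : b ^ α * t ^ (-(τ * α + 1)) = b * t ^ (-τ - 1) * (b * t ^ (-τ)) ^ (α - 1) := by
    rw [Real.mul_rpow hb.le (by positivity), ← Real.rpow_mul ht.le, mul_mul_mul_comm,
      mul_comm b, ← Real.rpow_add_one hb.ne', ← Real.rpow_add ht]
    ring_nf
  rw [frechetPDF, abs_mul, abs_mul, abs_neg, abs_of_pos hb, abs_of_pos (Real.rpow_pos_of_pos ht _),
    div_eq_mul_inv b, ← Real.rpow_neg ht.le, Real.one_rpow, one_mul]
  linear_combination |τ| / Real.Gamma α * Real.exp (-(b * t ^ (-τ))) * hpow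

lemma image_const_mul_rpow_Ioi (hτ : τ ≠ 0) (hb : 0 < b) :
    (fun t : ℝ ↦ b * t ^ (-τ)) '' Set.Ioi 0 = Set.Ioi 0 := by
  ext w
  refine ⟨fun ⟨t, ht, h⟩ ↦ h ▸ mul_pos hb (Real.rpow_pos_of_pos ht _), fun hw ↦ ?_⟩
  have hwb : 0 < w / b := div_pos hw hb
  refine ⟨(w / b) ^ (-τ)⁻¹, Real.rpow_pos_of_pos hwb _, ?_⟩
  dsimp only
  rw [Real.rpow_inv_rpow hwb.le (neg_ne_zero.2 hτ), mul_div_cancel₀ _ hb.ne']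

lemma lintegral_Ioi_comp_const_mul_rpow (hτ : τ ≠ 0) (hb : 0 < b) (F : ℝ → ENNReal) :
    ∫⁻ w in Set.Ioi 0, F w =
      ∫⁻ t in Set.Ioi 0, ENNReal.ofReal |b * (-τ * t ^ (-τ - 1))| * F (b * t ^ (-τ)) := by
  have hderiv : ∀ t ∈ Set.Ioi (0 : ℝ), HasDerivWithinAt (fun t ↦ b * t ^ (-τ))
      (b * (-τ * t ^ (-τ - 1))) (Set.Ioi 0) t := fun t ht ↦
    ((Real.hasDerivAt_rpow_const (Or.inl (ne_of_gt ht))).const_mul b).hasDerivWithinAt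
  have hinj : Set.InjOn (fun t : ℝ ↦ b * t ^ (-τ)) (Set.Ioi 0) := fun s hs t ht h ↦
    Real.rpow_left_injOn (neg_ne_zero.2 hτ) (Set.mem_Ioi.1 hs).le (Set.mem_Ioi.1 ht).le
      (mul_left_cancel₀ hb.ne' h)
  rw [← lintegral_image_eq_lintegral_abs_deriv_mul measurableSet_Ioi hderiv hinj,
    image_const_mul_rpow_Ioi hτ hb]

lemma measurePreserving_frechetMeasure_gammaMeasure (hτ : τ ≠ 0) (hb : 0 < b) :
    MeasurePreserving (fun t ↦ b * t ^ (-τ)) (frechetMeasure τ α b) (gammaMeasure α 1) := by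
  refine ⟨by fun_prop, Measure.ext_of_lintegral _ fun F hF ↦ ?_⟩
  rw [lintegral_map hF (by fun_prop), frechetMeasure, gammaMeasure_eq_withDensity_Ioi,
    lintegral_withDensity_eq_lintegral_mul _ (by fun_prop) (by fun_prop),
    lintegral_withDensity_eq_lintegral_mul _ (by fun_prop) hF]
  refine (setLIntegral_congr_fun measurableSet_Ioi fun t ht ↦ ?_).trans
    (lintegral_Ioi_comp_const_mul_rpow hτ hb _).symm
  simp only [Pi.mul_apply]
  rw [frechetPDF_eq_abs_deriv_mul hb ht, ENNReal.ofReal_mul (abs_nonneg _), mul_assoc]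

lemma isProbabilityMeasure_frechetMeasure (hτ : τ ≠ 0) (hα : 0 < α) (hb : 0 < b) :
    IsProbabilityMeasure (frechetMeasure τ α b) := by
  have hmp := measurePreserving_frechetMeasure_gammaMeasure (α := α) hτ hb
  rw [← Measure.isProbabilityMeasure_map_iff hmp.aemeasurable, hmp.map_eq]
  exact isProbabilityMeasure_gammaMeasure hα one_pos

lemma ae_frechetMeasure_pos : ∀ᵐ t ∂frechetMeasure τ α b, 0 < t :=
  (withDensity_absolutelyContinuous _ _).ae_le (ae_restrict_mem measurableSet_Ioi)

lemma log_ae_eq_frechetMeasure (hτ : τ ≠ 0) (hb : 0 < b) :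
    Real.log =ᵐ[frechetMeasure τ α b] fun t ↦ τ⁻¹ * (Real.log b - Real.log (b * t ^ (-τ))) := by
  filter_upwards [ae_frechetMeasure_pos] with t ht
  rw [Real.log_mul hb.ne' (Real.rpow_pos_of_pos ht _).ne', Real.log_rpow ht]
  field_simp
  ring

lemma memLp_log_frechetMeasure (hτ : τ ≠ 0) (hα : 0 < α) (hb : 0 < b) :
    MemLp Real.log 2 (frechetMeasure τ α b) := by
  have := isProbabilityMeasure_frechetMeasure hτ hα hb
  have hZ := (memLp_log_gammaMeasure hα).comp_measurePreserving
    (measurePreserving_frechetMeasure_gammaMeasure hτ hb)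
  exact (memLp_congr_ae (log_ae_eq_frechetMeasure hτ hb)).2
    (((memLp_const (Real.log b)).sub hZ).const_mul τ⁻¹)

lemma integral_log_frechetMeasure (hτ : τ ≠ 0) (hα : 0 < α) (hb : 0 < b) :
    ∫ t, Real.log t ∂frechetMeasure τ α b = (Real.log b - digamma α) / τ := by
  have := isProbabilityMeasure_frechetMeasure hτ hα hb
  have hmp := measurePreserving_frechetMeasure_gammaMeasure (α := α) hτ hb
  have hint : Integrable (fun t ↦ Real.log (b * t ^ (-τ))) (frechetMeasure τ α b) :=
    ((memLp_log_gammaMeasure hα).comp_measurePreserving hmp).integrable one_le_two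
  have hmean : ∫ t, Real.log (b * t ^ (-τ)) ∂frechetMeasure τ α b = digamma α := by
    rw [← integral_log_gammaMeasure hα, ← hmp.map_eq, integral_map (by fun_prop) (by fun_prop)]
  rw [integral_congr_ae (log_ae_eq_frechetMeasure hτ hb), integral_const_mul,
    integral_sub (integrable_const _) hint, integral_const, hmean,
    probReal_univ, one_smul, inv_mul_eq_div]

lemma variance_log_frechetMeasure (hτ : τ ≠ 0) (hα : 0 < α) (hb : 0 < b) :
    Var[Real.log; frechetMeasure τ α b] = trigamma α / τ ^ 2 := by
  have := isProbabilityMeasure_frechetMeasure hτ hα hb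
  have hmp := measurePreserving_frechetMeasure_gammaMeasure (α := α) hτ hb
  have hvar : Var[fun t ↦ Real.log (b * t ^ (-τ)); frechetMeasure τ α b] = trigamma α := by
    rw [← variance_log_gammaMeasure hα, ← hmp.map_eq,
      variance_map (by fun_prop) (by fun_prop), Function.comp_def]
  rw [variance_congr (log_ae_eq_frechetMeasure hτ hb), variance_const_mul,
    variance_const_sub (Measurable.aestronglyMeasurable (by fun_prop)), hvar, inv_pow,
    inv_mul_eq_div]

end FrechetLaw

section SimplexMeasure

variable {N : ℕ}

lemma fillMap_succ (u : Fin N → ℝ) :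
    fillMap (N + 1) u = Fin.snoc (α := fun _ ↦ ℝ) u (1 - ∑ j, u j) := by
  ext i
  refine Fin.lastCases ?_ (fun j ↦ ?_) i <;> simp [fillMap]

lemma measurable_fillMap (K : ℕ) : Measurable (fillMap K) := by
  refine measurable_pi_lambda _ fun i ↦ ?_
  by_cases h : (i : ℕ) < K - 1 <;> simp only [fillMap, h, dite_true, dite_false] <;> fun_prop

instance (K : ℕ) : SFinite (simplexMeasure K) := by
  unfold simplexMeasure
  infer_instance

lemma sum_snoc_sub_sum (s : ℝ) (u : Fin N → ℝ) :
    ∑ i, Fin.snoc (α := fun _ ↦ ℝ) u (s - ∑ j, u j) i = s := by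
  simp [Fin.sum_univ_castSucc]

lemma sum_fillMap_succ (u : Fin N → ℝ) : ∑ i, fillMap (N + 1) u i = 1 := by
  rw [fillMap_succ, sum_snoc_sub_sum]

lemma snoc_smul_sub_sum (s : ℝ) (u : Fin N → ℝ) :
    Fin.snoc (α := fun _ ↦ ℝ) (s • u) (s - ∑ j, (s • u) j) = s • fillMap (N + 1) u := by
  ext i
  refine Fin.lastCases ?_ (fun j ↦ ?_) i <;> simp [fillMap_succ, ← mul_sum, mul_sub]

lemma preimage_fillMap_succ_Ici :
    fillMap (N + 1) ⁻¹' Set.Ici 0 = {u : Fin N → ℝ | (∀ j, 0 ≤ u j) ∧ ∑ j, u j ≤ 1} := by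
  ext u
  simp [fillMap_succ, Pi.le_def, Fin.forall_fin_succ']

lemma simplexMeasure_succ : simplexMeasure (N + 1) =
    (volume.restrict (fillMap (N + 1) ⁻¹' Set.Ici 0)).map (fillMap (N + 1)) := by
  rw [preimage_fillMap_succ_Ici]
  rfl

lemma lintegral_simplexMeasure_succ {H : (Fin (N + 1) → ℝ) → ENNReal} (hH : Measurable H) :
    ∫⁻ x, H x ∂simplexMeasure (N + 1) =
      ∫⁻ u : Fin N → ℝ, (Set.Ici 0).indicator H (fillMap (N + 1) u) := by
  rw [simplexMeasure_succ, lintegral_map hH (measurable_fillMap _),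
    ← lintegral_indicator (measurable_fillMap _ measurableSet_Ici)]
  rfl

lemma lintegral_eq_mul_lintegral_comp_smul {E : Type*} [NormedAddCommGroup E] [NormedSpace ℝ E]
    [MeasurableSpace E] [BorelSpace E] [FiniteDimensional ℝ E] (μ : Measure E) [μ.IsAddHaarMeasure]
    {H : E → ENNReal} (hH : Measurable H) {s : ℝ} (hs : 0 < s) :
    ∫⁻ u, H u ∂μ = ENNReal.ofReal (s ^ Module.finrank ℝ E) * ∫⁻ u, H (s • u) ∂μ := by
  rw [← lintegral_map hH (measurable_const_smul s), Measure.map_addHaar_smul μ hs.ne',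
    lintegral_smul_measure, smul_eq_mul, ← mul_assoc, ← ENNReal.ofReal_mul (by positivity),
    abs_of_pos (by positivity), mul_inv_cancel₀ (by positivity), ENNReal.ofReal_one, one_mul]

@[fun_prop]
lemma measurable_snoc_sub_sum :
    Measurable fun p : (Fin N → ℝ) × ℝ ↦ Fin.snoc (α := fun _ ↦ ℝ) p.1 (p.2 - ∑ j, p.1 j) := by
  refine measurable_pi_lambda _ fun i ↦ ?_
  refine Fin.lastCases ?_ (fun j ↦ ?_) i <;> simp only [Fin.snoc_last, Fin.snoc_castSucc] <;>
    fun_prop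

lemma lintegral_eq_lintegral_snoc_sub_sum {G : (Fin (N + 1) → ℝ) → ENNReal} (hG : Measurable G) :
    ∫⁻ y, G y = ∫⁻ s : ℝ, ∫⁻ u : Fin N → ℝ,
      G (Fin.snoc (α := fun _ ↦ ℝ) u (s - ∑ j, u j)) := by
  let e := (MeasurableEquiv.piFinSuccAbove (fun _ : Fin (N + 1) ↦ ℝ) (Fin.last N)).symm
  have hmp : MeasurePreserving e :=
    (volume_preserving_piFinSuccAbove (fun _ : Fin (N + 1) ↦ ℝ) (Fin.last N)).symm
  have he (t : ℝ) (u : Fin N → ℝ) : e (t, u) = Fin.snoc (α := fun _ ↦ ℝ) u t :=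
    Fin.insertNth_last' t u
  have hGe : Measurable fun p ↦ G (e p) := hG.comp e.measurable
  have hshear (u : Fin N → ℝ) : ∫⁻ t : ℝ, G (Fin.snoc (α := fun _ ↦ ℝ) u t) =
      ∫⁻ s : ℝ, G (Fin.snoc (α := fun _ ↦ ℝ) u (s - ∑ j, u j)) :=
    (lintegral_sub_right_eq_self (fun t ↦ G (Fin.snoc (α := fun _ ↦ ℝ) u t)) _).symm
  rw [← hmp.lintegral_comp hG, Measure.volume_eq_prod,
    lintegral_prod_symm _ hGe.aemeasurable]
  simp only [he, hshear]
  exact lintegral_lintegral_swap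
    (f := fun u s ↦ G (Fin.snoc (α := fun _ ↦ ℝ) u (s - ∑ j, u j)))
    (hG.comp measurable_snoc_sub_sum).aemeasurable

lemma setLIntegral_Ici_eq_lintegral_simplexMeasure {F : (Fin (N + 1) → ℝ) → ENNReal}
    (hF : Measurable F) :
    ∫⁻ y in Set.Ici 0, F y = ∫⁻ s in Set.Ioi (0 : ℝ), ENNReal.ofReal (s ^ N) *
      ∫⁻ x, F (s • x) ∂simplexMeasure (N + 1) := by
  set G := (Set.Ici 0).indicator F with hG
  have hGm : Measurable G := hF.indicator measurableSet_Ici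
  rw [← lintegral_indicator measurableSet_Ici, lintegral_eq_lintegral_snoc_sub_sum hGm,
    ← lintegral_indicator measurableSet_Ioi]
  refine lintegral_congr_ae ?_
  filter_upwards [Measure.ae_ne volume (0 : ℝ)] with s hs0
  rcases hs0.lt_or_gt with hs | hs
  · have hout (u : Fin N → ℝ) : G (Fin.snoc (α := fun _ ↦ ℝ) u (s - ∑ j, u j)) = 0 :=
      Set.indicator_of_notMem (fun hu : (0 : Fin (N + 1) → ℝ) ≤ _ ↦ hs.not_ge <|
        sum_snoc_sub_sum s u ▸ sum_nonneg fun i _ ↦ hu i) _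
    simp [hout, hs.le]
  · have hscale (x : Fin (N + 1) → ℝ) :
        G (s • x) = (Set.Ici 0).indicator (fun x ↦ F (s • x)) x := by
      simp [hG, Set.indicator, Pi.le_def, mul_nonneg_iff_of_pos_left hs]
    have hGs : Measurable fun u : Fin N → ℝ ↦
        G (Fin.snoc (α := fun _ ↦ ℝ) u (s - ∑ j, u j)) :=
      hGm.comp (measurable_snoc_sub_sum.comp measurable_prodMk_right)
    rw [Set.indicator_of_mem (Set.mem_Ioi.2 hs), lintegral_simplexMeasure_succ (by fun_prop),
      lintegral_eq_mul_lintegral_comp_smul volume hGs hs]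
    simp only [snoc_smul_sub_sum, hscale, Module.finrank_fin_fun]

lemma restrict_Ici_zero_eq_pi_restrict_Ioi {ι : Type*} [Fintype ι] :
    (volume : Measure (ι → ℝ)).restrict (Set.Ici 0) =
      Measure.pi fun _ ↦ volume.restrict (Set.Ioi 0) := by
  simp_rw [← Set.pi_univ_Ici, volume_pi, Measure.restrict_pi_pi, Pi.zero_apply,
    restrict_Ioi_eq_restrict_Ici]

lemma ae_simplexMeasure_succ_nonneg : ∀ᵐ x ∂simplexMeasure (N + 1), 0 ≤ x := by
  rw [simplexMeasure_succ, ae_map_iff (measurable_fillMap _).aemeasurable measurableSet_Ici]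
  exact ae_restrict_mem (measurable_fillMap _ measurableSet_Ici)

lemma ae_simplexMeasure_succ_sum_eq_one : ∀ᵐ x ∂simplexMeasure (N + 1), ∑ i, x i = 1 := by
  rw [simplexMeasure_succ, ae_map_iff (measurable_fillMap _).aemeasurable
    (measurableSet_eq_fun (by fun_prop) measurable_const)]
  exact .of_forall sum_fillMap_succ

lemma ae_simplexMeasure_succ_ne_zero (i : Fin (N + 1)) :
    ∀ᵐ x ∂simplexMeasure (N + 1), x i ≠ 0 := by
  set F : (Fin (N + 1) → ℝ) → ENNReal := {y | y i = 0}.indicator 1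
  have hmeas : MeasurableSet {y : Fin (N + 1) → ℝ | y i = 0} :=
    measurableSet_eq_fun (by fun_prop) measurable_const
  have hFm : Measurable F := measurable_one.indicator hmeas
  have hzero : ∫⁻ y in Set.Ici 0, F y = 0 := by
    rw [lintegral_indicator_one hmeas]
    exact Measure.absolutelyContinuous_of_le Measure.restrict_le_self
      (Measure.pi_hyperplane _ i 0)
  rw [setLIntegral_Ici_eq_lintegral_simplexMeasure hFm,
    lintegral_eq_zero_iff (by fun_prop)] at hzero
  have : (ae (volume.restrict (Set.Ioi (0 : ℝ)))).NeBot := ae_restrict_neBot.2 (by simp)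
  obtain ⟨s, hs, hspos⟩ := (hzero.and (ae_restrict_mem measurableSet_Ioi)).exists
  have hinv (x : Fin (N + 1) → ℝ) : F (s • x) = F x := by
    simp [F, Set.indicator, (Set.mem_Ioi.1 hspos).ne']
  simpa [hinv, F, lintegral_indicator_one hmeas, (pow_pos (Set.mem_Ioi.1 hspos) N).not_ge,
    ae_iff] using hs

lemma ae_simplexMeasure_succ_pos : ∀ᵐ x ∂simplexMeasure (N + 1), ∀ i, 0 < x i := by
  filter_upwards [ae_simplexMeasure_succ_nonneg, ae_all_iff.2 ae_simplexMeasure_succ_ne_zero]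
    with x hnonneg hne i
  exact (hnonneg i).lt_of_ne' (hne i)

end SimplexMeasure

section InverseSchlomilchLaw

open ProbabilityTheory

variable {N : ℕ} {α β : Fin (N + 1) → ℝ} {τ : ℝ}

/-- The density at `x` of the inverse Schlömilch law `IS(α, β, τ)` on the simplex. -/
noncomputable def invSchlomilchPDF {K : ℕ} (α β : Fin K → ℝ) (τ : ℝ) (x : Fin K → ℝ) : ℝ :=
  |τ| ^ (K - 1) * Real.Gamma (∑ j, α j) * (∏ j, β j ^ α j / Real.Gamma (α j)) *
    (∏ j, x j ^ (-(τ * α j + 1))) * kfun K β τ x ^ (-∑ j, α j)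

/-- The inverse Schlömilch law `IS(α, β, τ)`, as a measure on `ℝ^K` carried by the simplex. -/
noncomputable def invSchlomilchMeasure {K : ℕ} (α β : Fin K → ℝ) (τ : ℝ) : Measure (Fin K → ℝ) :=
  (simplexMeasure K).withDensity fun x ↦ ENNReal.ofReal (invSchlomilchPDF α β τ x)

@[fun_prop]
lemma measurable_kfun {K : ℕ} (β : Fin K → ℝ) (τ : ℝ) : Measurable (kfun K β τ) := by
  unfold kfun
  fun_prop

@[fun_prop]
lemma measurable_invSchlomilchPDF {K : ℕ} (α β : Fin K → ℝ) (τ : ℝ) :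
    Measurable (invSchlomilchPDF α β τ) := by
  unfold invSchlomilchPDF
  fun_prop

lemma kfun_pos {K : ℕ} [NeZero K] {β : Fin K → ℝ} (hβ : ∀ j, 0 < β j) {x : Fin K → ℝ}
    (hx : ∀ j, 0 < x j) : 0 < kfun K β τ x :=
  sum_pos (fun j _ ↦ div_pos (hβ j) (Real.rpow_pos_of_pos (hx j) _)) univ_nonempty

lemma invSchlomilchPDF_nonneg (hα : ∀ j, 0 < α j) (hβ : ∀ j, 0 < β j) {x : Fin (N + 1) → ℝ}
    (hx : ∀ j, 0 < x j) : 0 ≤ invSchlomilchPDF α β τ x := by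
  have hk := kfun_pos (τ := τ) hβ hx
  have hΓ := Real.Gamma_pos_of_pos (sum_pos (fun j _ ↦ hα j) univ_nonempty)
  have hprod : 0 ≤ ∏ j, β j ^ α j / Real.Gamma (α j) := prod_nonneg fun j _ ↦
    div_nonneg (Real.rpow_nonneg (hβ j).le _) (Real.Gamma_pos_of_pos (hα j)).le
  have hpow : 0 ≤ ∏ j, x j ^ (-(τ * α j + 1)) :=
    prod_nonneg fun j _ ↦ Real.rpow_nonneg (hx j).le _
  unfold invSchlomilchPDF
  positivity

lemma pow_mul_prod_frechetPDF (hα : ∀ j, 0 < α j) (hβ : ∀ j, 0 < β j) {x : Fin (N + 1) → ℝ}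
    (hx : ∀ j, 0 < x j) {s : ℝ} (hs : 0 < s) :
    s ^ N * ∏ j, frechetPDF τ (α j) (β j) (s * x j) =
      invSchlomilchPDF α β τ x * frechetPDF τ (∑ j, α j) (kfun (N + 1) β τ x) s := by
  have hk := kfun_pos (τ := τ) hβ hx
  have hΓ := (Real.Gamma_pos_of_pos (sum_pos (fun j _ ↦ hα j) univ_nonempty)).ne'
  have hfactor (j : Fin (N + 1)) : frechetPDF τ (α j) (β j) (s * x j) =
      |τ| * (β j ^ α j / Real.Gamma (α j)) * x j ^ (-(τ * α j + 1)) * s ^ (-(τ * α j + 1)) *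
        Real.exp (-(β j / (s * x j) ^ τ)) := by
    rw [frechetPDF, Real.mul_rpow hs.le (hx j).le]
    ring
  have hexp : ∏ j, Real.exp (-(β j / (s * x j) ^ τ)) =
      Real.exp (-(kfun (N + 1) β τ x / s ^ τ)) := by
    rw [← Real.exp_sum, sum_neg_distrib, kfun, sum_div]
    simp_rw [Real.mul_rpow hs.le (hx _).le, div_div, mul_comm (s ^ τ)]
  have hpow : s ^ N * ∏ j, s ^ (-(τ * α j + 1)) = s ^ (-(τ * ∑ j, α j + 1)) := by
    rw [← Real.rpow_sum_of_pos hs, ← Real.rpow_natCast, ← Real.rpow_add hs]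
    congr 1
    simp only [sum_neg_distrib, sum_add_distrib, mul_sum, sum_const, card_univ, Fintype.card_fin,
      nsmul_eq_mul, mul_one, Nat.cast_add, Nat.cast_one]
    ring
  simp only [hfactor, prod_mul_distrib, prod_const, card_univ, Fintype.card_fin, hexp]
  rw [frechetPDF, ← hpow, invSchlomilchPDF, Nat.add_sub_cancel, Real.rpow_neg hk.le]
  have := (Real.rpow_pos_of_pos hk (∑ j, α j)).ne'
  field_simp
  ring

lemma lintegral_frechetPDF {α b : ℝ} (hτ : τ ≠ 0) (hα : 0 < α) (hb : 0 < b) :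
    ∫⁻ t in Set.Ioi 0, ENNReal.ofReal (frechetPDF τ α b t) = 1 := by
  have := isProbabilityMeasure_frechetMeasure hτ hα hb
  simpa [frechetMeasure] using measure_univ (μ := frechetMeasure τ α b)

lemma pi_frechetMeasure_eq_withDensity (hτ : τ ≠ 0) (hα : ∀ j, 0 < α j) (hβ : ∀ j, 0 < β j) :
    Measure.pi (fun j ↦ frechetMeasure τ (α j) (β j)) = (volume.restrict (Set.Ici 0)).withDensity
      fun y ↦ ∏ j, ENNReal.ofReal (frechetPDF τ (α j) (β j) (y j)) := by
  have (j : Fin (N + 1)) : SigmaFinite (((volume : Measure ℝ).restrict (Set.Ioi 0)).withDensity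
      fun t ↦ ENNReal.ofReal (frechetPDF τ (α j) (β j) t)) :=
    have := isProbabilityMeasure_frechetMeasure hτ (hα j) (hβ j)
    inferInstanceAs (SigmaFinite (frechetMeasure τ (α j) (β j)))
  rw [restrict_Ici_zero_eq_pi_restrict_Ioi]
  exact pi_withDensity_eq _ fun j ↦ by fun_prop

theorem map_normalize_pi_frechetMeasure (hτ : τ ≠ 0) (hα : ∀ j, 0 < α j) (hβ : ∀ j, 0 < β j) :
    (Measure.pi fun j ↦ frechetMeasure τ (α j) (β j)).map (fun y ↦ (∑ j, y j)⁻¹ • y) =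
      invSchlomilchMeasure α β τ := by
  refine Measure.ext_of_lintegral _ fun F hF ↦ ?_
  have hradial : ∀ᵐ x ∂simplexMeasure (N + 1), ∀ s ∈ Set.Ioi (0 : ℝ), ENNReal.ofReal (s ^ N) *
      ((∏ j, ENNReal.ofReal (frechetPDF τ (α j) (β j) ((s • x) j))) *
        F ((∑ j, (s • x) j)⁻¹ • s • x)) =
      ENNReal.ofReal (invSchlomilchPDF α β τ x) * F x *
        ENNReal.ofReal (frechetPDF τ (∑ j, α j) (kfun (N + 1) β τ x) s) := by
    filter_upwards [ae_simplexMeasure_succ_pos, ae_simplexMeasure_succ_sum_eq_one]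
      with x hx hsum s (hs : 0 < s)
    have hnorm : (∑ j, (s • x) j)⁻¹ • s • x = x := by
      simp [← mul_sum, hsum, hs.ne']
    rw [hnorm, ← ENNReal.ofReal_prod_of_nonneg fun j _ ↦
        frechetPDF_nonneg (τ := τ) (t := (s • x) j) (hα j) (hβ j) (mul_pos hs (hx j)),
      ← mul_assoc, ← ENNReal.ofReal_mul (by positivity)]
    simp only [Pi.smul_apply, smul_eq_mul]
    rw [pow_mul_prod_frechetPDF hα hβ hx hs,
      ENNReal.ofReal_mul (invSchlomilchPDF_nonneg hα hβ hx), mul_right_comm]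
  have hA : 0 < ∑ j, α j := sum_pos (fun j _ ↦ hα j) univ_nonempty
  rw [lintegral_map hF (by fun_prop), pi_frechetMeasure_eq_withDensity hτ hα hβ,
    lintegral_withDensity_eq_lintegral_mul _ (by fun_prop) (by fun_prop),
    setLIntegral_Ici_eq_lintegral_simplexMeasure (by fun_prop), invSchlomilchMeasure,
    lintegral_withDensity_eq_lintegral_mul _ (by fun_prop) hF]
  simp only [Pi.mul_apply]
  simp_rw [← lintegral_const_mul' _ _ ENNReal.ofReal_ne_top]
  rw [lintegral_lintegral_swap (by fun_prop)]
  refine lintegral_congr_ae ?_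
  filter_upwards [hradial, ae_simplexMeasure_succ_pos] with x hx hpos
  rw [setLIntegral_congr_fun measurableSet_Ioi hx, lintegral_const_mul _ (by fun_prop),
    lintegral_frechetPDF hτ hA (kfun_pos hβ hpos), mul_one]

lemma ae_pi_frechetMeasure_pos (hτ : τ ≠ 0) (hα : ∀ j, 0 < α j) (hβ : ∀ j, 0 < β j) :
    ∀ᵐ y ∂Measure.pi fun j ↦ frechetMeasure τ (α j) (β j), ∀ j, 0 < y j := by
  have (j : Fin (N + 1)) := isProbabilityMeasure_frechetMeasure hτ (hα j) (hβ j)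
  exact ae_all_iff.2 fun j ↦
    (measurePreserving_eval _ j).quasiMeasurePreserving.ae ae_frechetMeasure_pos

lemma integral_log_sub_mul_log_sub_pi_frechetMeasure (hτ : τ ≠ 0) (hα : ∀ j, 0 < α j)
    (hβ : ∀ j, 0 < β j) (i k l : Fin (N + 1)) :
    ∫ y, (Real.log (y i) - Real.log (y k)) * (Real.log (y i) - Real.log (y l))
        ∂Measure.pi (fun j ↦ frechetMeasure τ (α j) (β j)) =
      (((Real.log (β i) - digamma (α i)) - (Real.log (β k) - digamma (α k))) *
          ((Real.log (β i) - digamma (α i)) - (Real.log (β l) - digamma (α l))) +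
        ((1 - kd i k - kd i l) * trigamma (α i) + kd k l * trigamma (α k))) / τ ^ 2 := by
  have (j : Fin (N + 1)) := isProbabilityMeasure_frechetMeasure hτ (hα j) (hβ j)
  set μ := Measure.pi fun j ↦ frechetMeasure τ (α j) (β j)
  have hlaw (j : Fin (N + 1)) : MeasurePreserving (Function.eval j) μ _ :=
    measurePreserving_eval (fun j ↦ frechetMeasure τ (α j) (β j)) j
  have hindep : iIndepFun (fun j (y : Fin (N + 1) → ℝ) ↦ Real.log (y j)) μ :=
    iIndepFun_pi fun j ↦ Real.measurable_log.aemeasurable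
  have hmemLp (j : Fin (N + 1)) : MemLp (fun y ↦ Real.log (y j)) 2 μ :=
    (memLp_log_frechetMeasure hτ (hα j) (hβ j)).comp_measurePreserving (hlaw j)
  have hmean (j : Fin (N + 1)) : ∫ y, Real.log (y j) ∂μ = (Real.log (β j) - digamma (α j)) / τ := by
    rw [← integral_log_frechetMeasure hτ (hα j) (hβ j), ← (hlaw j).map_eq,
      integral_map (hlaw j).aemeasurable (by fun_prop)]
  have hvar (j : Fin (N + 1)) : Var[fun y ↦ Real.log (y j); μ] = trigamma (α j) / τ ^ 2 := by
    rw [← variance_log_frechetMeasure hτ (hα j) (hβ j), ← (hlaw j).map_eq,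
      variance_map (by fun_prop) (hlaw j).aemeasurable]
    rfl
  rw [integral_sub_mul_sub_of_iIndepFun hindep hmemLp]
  simp only [hmean, hvar, kd]
  ring

theorem integral_log_sub_mul_log_sub_invSchlomilchMeasure (hτ : τ ≠ 0) (hα : ∀ j, 0 < α j)
    (hβ : ∀ j, 0 < β j) (i k l : Fin (N + 1)) :
    ∫ x, (Real.log (x i) - Real.log (x k)) * (Real.log (x i) - Real.log (x l))
        ∂invSchlomilchMeasure α β τ =
      (((Real.log (β i) - digamma (α i)) - (Real.log (β k) - digamma (α k))) *
          ((Real.log (β i) - digamma (α i)) - (Real.log (β l) - digamma (α l))) +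
        ((1 - kd i k - kd i l) * trigamma (α i) + kd k l * trigamma (α k))) / τ ^ 2 := by
  rw [← map_normalize_pi_frechetMeasure hτ hα hβ, integral_map (by fun_prop) (by fun_prop),
    ← integral_log_sub_mul_log_sub_pi_frechetMeasure hτ hα hβ]
  refine integral_congr_ae ?_
  filter_upwards [ae_pi_frechetMeasure_pos hτ hα hβ] with y hy
  have hsum : (∑ j, y j)⁻¹ ≠ 0 := inv_ne_zero (sum_pos (fun j _ ↦ hy j) univ_nonempty).ne'
  simp only [Pi.smul_apply, smul_eq_mul, Real.log_mul hsum (hy _).ne', add_sub_add_left_eq_sub]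

end InverseSchlomilchLaw

section PairShape

variable {K : ℕ} (m n : Fin K)

/-- The shape vector `1 + e_m + e_n`. -/
noncomputable def pairShape (j : Fin K) : ℝ := 1 + kd j m + kd j n

lemma pairShape_pos (j : Fin K) : 0 < pairShape m n j := by
  unfold pairShape kd
  split_ifs <;> norm_num

lemma digamma_pairShape (j : Fin K) :
    digamma (pairShape m n j) = digamma 1 + (kd j m + kd j n - 1 / 2 * (kd j m * kd j n)) := by
  have h2 := digamma_add_one one_pos
  have h3 := digamma_add_one two_pos
  rw [one_add_one_eq_two] at h2
  unfold pairShape kd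
  split_ifs <;> norm_num at h2 h3 ⊢ <;> linarith

lemma trigamma_pairShape (j : Fin K) : trigamma (pairShape m n j) =
    Real.pi ^ 2 / 6 - (kd j m + kd j n - 3 / 4 * (kd j m * kd j n)) := by
  have h1 := trigamma_one
  have h2 := trigamma_add_one one_pos
  have h3 := trigamma_add_one two_pos
  rw [one_add_one_eq_two] at h2
  unfold pairShape kd
  split_ifs <;> norm_num at h1 h2 h3 ⊢ <;> linarith

lemma sum_pairShape : ∑ j, pairShape m n j = K + 2 := by
  simp [pairShape, kd, sum_add_distrib]
  ring

lemma prod_rpow_kd (f : Fin K → ℝ) : ∏ j, f j ^ (kd j m) = f m := by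
  simp [kd, apply_ite]

lemma prod_Gamma_pairShape : ∏ j, Real.Gamma (pairShape m n j) = 1 + kd m n := by
  have h2 : Real.Gamma 2 = 1 := Real.Gamma_two
  have h3 : Real.Gamma 3 = 2 := by
    norm_num [Real.Gamma_nat_eq_factorial 2]
  have hΓ (j : Fin K) : Real.Gamma (pairShape m n j) = if j = m then 1 + kd m n else 1 := by
    unfold pairShape kd
    split_ifs <;> grind [Real.Gamma_one]
  simp [hΓ]

lemma kd_second_moment_identity (i k l : Fin K) :
    ((kd i m + kd i n - 1 / 2 * (kd i m * kd i n)) -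
        (kd k m + kd k n - 1 / 2 * (kd k m * kd k n))) *
      ((kd i m + kd i n - 1 / 2 * (kd i m * kd i n)) -
        (kd l m + kd l n - 1 / 2 * (kd l m * kd l n))) -
      (1 - kd i k - kd i l) * (kd i m + kd i n - 3 / 4 * (kd i m * kd i n)) -
      kd k l * (kd k m + kd k n - 3 / 4 * (kd k m * kd k n)) =
    kd i m * kd i n + kd i l * kd i m * kd i n + kd i k * kd i m * kd i n -
      kd k l * kd k m * kd k n - kd i m * kd k n - kd i m * kd l n - kd i n * kd k m -
      kd i n * kd l m + kd k m * kd l n + kd k n * kd l m := by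
  unfold kd
  grind

end PairShape

section PairShapeDensity

variable {N : ℕ} {β : Fin (N + 1) → ℝ} {τ : ℝ}

lemma prod_rpow_neg_mul_pairShape_add_one (m n : Fin (N + 1)) {x : Fin (N + 1) → ℝ}
    (hx : ∀ j, 0 < x j) : ∏ j, x j ^ (-(τ * pairShape m n j + 1)) =
      (∏ j, x j ^ (-(τ + 1))) / (x m ^ τ * x n ^ τ) := by
  have hfactor (j : Fin (N + 1)) : x j ^ (-(τ * pairShape m n j + 1)) =
      x j ^ (-(τ + 1)) * ((x j ^ (-τ)) ^ kd j m * (x j ^ (-τ)) ^ kd j n) := by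
    rw [← Real.rpow_mul (hx j).le, ← Real.rpow_mul (hx j).le, ← Real.rpow_add (hx j),
      ← Real.rpow_add (hx j), pairShape]
    ring_nf
  simp_rw [hfactor, prod_mul_distrib, prod_rpow_kd, Real.rpow_neg (hx _).le τ, ← mul_inv,
    ← div_eq_mul_inv]

lemma prod_rpow_pairShape (m n : Fin (N + 1)) (hβ : ∀ j, 0 < β j) :
    ∏ j, β j ^ pairShape m n j = (∏ j, β j) * β m * β n := by
  simp_rw [pairShape, Real.rpow_add (hβ _), Real.rpow_one, prod_mul_distrib, prod_rpow_kd]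

lemma invSchlomilchPDF_pairShape (hτ : 0 < τ) (hβ : ∀ j, 0 < β j) (m n : Fin (N + 1))
    {x : Fin (N + 1) → ℝ} (hx : ∀ j, 0 < x j) :
    invSchlomilchPDF (pairShape m n) β τ x =
      ((N + 1 : ℕ) : ℝ) * (((N + 1 : ℕ) : ℝ) + 1) * β m * β n /
          (J0 (N + 1) β τ * (1 + kd m n)) *
        (hfun (N + 1) β τ x / (kfun (N + 1) β τ x ^ 2 * x m ^ τ * x n ^ τ)) := by
  have hk := kfun_pos (τ := τ) hβ hx
  have hΓ : Real.Gamma (((N + 1 : ℕ) : ℝ) + 2) = (N + 2) * (N + 1) * (Nat.factorial N : ℝ) := by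
    rw [show ((N + 1 : ℕ) : ℝ) + 2 = (N + 2 : ℕ) + 1 by push_cast; ring,
      Real.Gamma_nat_eq_factorial]
    push_cast [Nat.factorial_succ]
    ring
  have hkpow : kfun (N + 1) β τ x ^ (-(((N + 1 : ℕ) : ℝ) + 2)) =
      kfun (N + 1) β τ x ^ (-((N + 1 : ℕ) : ℝ)) / kfun (N + 1) β τ x ^ 2 := by
    rw [neg_add, ← sub_eq_add_neg, Real.rpow_sub hk, Real.rpow_two]
  rw [invSchlomilchPDF, sum_pairShape, hΓ, hkpow, prod_div_distrib, prod_Gamma_pairShape,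
    prod_rpow_pairShape m n hβ, prod_rpow_neg_mul_pairShape_add_one m n hx, abs_of_pos hτ,
    hfun, ← kfun, J0, Nat.add_sub_cancel]
  push_cast
  field_simp
  ring

end PairShapeDensity

/-- Raw log-ratio second moments `E[log(X_i/X_k) log(X_i/X_l)]` of the inverse
Schlömilch distribution `IS(1 + e_m + e_n, β, τ)`.  (A Kronecker delta with several
indices, e.g. `δ_{imn} = kd i m * kd i n`, equals 1 iff all its indices coincide.) -/
theorem is_special_raw_second_moment
    (K : ℕ) (hK : 2 ≤ K) (τ : ℝ) (hτ : 0 < τ)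
    (β : Fin K → ℝ) (hβ : ∀ i, 0 < β i) (i k l m n : Fin K) :
    ((K : ℝ) * ((K : ℝ) + 1) * β m * β n / (J0 K β τ * (1 + kd m n))) *
      ∫ x, hfun K β τ x * (Real.log (x i) - Real.log (x k)) *
            (Real.log (x i) - Real.log (x l)) /
          (kfun K β τ x ^ 2 * x m ^ τ * x n ^ τ) ∂(simplexMeasure K)
      = τ⁻¹ ^ 2 *
          (kd i m * kd i n + kd i l * kd i m * kd i n + kd i k * kd i m * kd i n
            - kd k l * kd k m * kd k n
            - kd i m * kd k n - kd i m * kd l n - kd i n * kd k m - kd i n * kd l m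
            + kd k m * kd l n + kd k n * kd l m
            - (2 * kd i m + 2 * kd i n - kd k m - kd k n - kd l m - kd l n
                - kd i m * kd i n + (1 / 2) * (kd k m * kd k n)
                + (1 / 2) * (kd l m * kd l n)) * Real.log (β i)
            + (kd i m + kd i n - kd k m - kd k n - (1 / 2) * (kd i m * kd i n)
                + (1 / 2) * (kd k m * kd k n)) * Real.log (β l)
            + (kd i m + kd i n - kd l m - kd l n - (1 / 2) * (kd i m * kd i n)
                + (1 / 2) * (kd l m * kd l n)) * Real.log (β k)
            + (Real.log (β i) - Real.log (β k)) * (Real.log (β i) - Real.log (β l))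
            + (1 - kd i k - kd i l + kd k l) * Real.pi ^ 2 / 6) := by
  obtain ⟨N, rfl⟩ : ∃ N, K = N + 1 := ⟨K - 1, by omega⟩
  have hα := pairShape_pos m n
  have hmoment := integral_log_sub_mul_log_sub_invSchlomilchMeasure hτ.ne' hα hβ i k l
  rw [invSchlomilchMeasure, integral_withDensity_eq_integral_toReal_smul (by fun_prop)
    (by simp)] at hmoment
  rw [← integral_const_mul]
  calc _ = ∫ x, (ENNReal.ofReal (invSchlomilchPDF (pairShape m n) β τ x)).toReal •
        ((Real.log (x i) - Real.log (x k)) * (Real.log (x i) - Real.log (x l)))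
          ∂simplexMeasure (N + 1) := by
        refine integral_congr_ae (ae_simplexMeasure_succ_pos.mono fun x hx ↦ ?_)
        dsimp only
        rw [ENNReal.toReal_ofReal (invSchlomilchPDF_nonneg hα hβ hx),
          invSchlomilchPDF_pairShape hτ hβ m n hx, smul_eq_mul]
        ring
    _ = _ := by
        rw [hmoment, ← kd_second_moment_identity]
        simp only [digamma_pairShape, trigamma_pairShape]
        field_simp
        ring
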